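/- For every n and d, the supremum of the Gaussian average sensitivity gas(f) over all degree-d polynomial threshold functions f : ℝⁿ → {−1,1} in n variables is at most the supremum of the average sensitivity as(g) over all degree-d polynomial threshold functions g : ℝⁿ → {−1,1} in n variables. Equivalently: for every degree-d polynomial threshold function f in n variables and every real s such that as(g) ≤ s for all degree-d polynomial threshold functions g in n variables, one has gas(f) ≤ s. -/

import Mathlib

open MeasureTheory ProbabilityTheory
open scoped ENNReal

/-- The standard Gaussian measure on `ℝⁿ`. -/
noncomputable def stdGaussian (n : ℕ) : Measure (Fin n → ℝ) :=
  Measure.pi fun _ => gaussianReal 0 1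

/-- The uniform (Bernoulli) measure on `{-1, 1}`. -/
noncomputable def bernoulliPM : Measure ℝ :=
  ((1 : ℝ≥0∞) / 2) • Measure.dirac (1 : ℝ) + ((1 : ℝ≥0∞) / 2) • Measure.dirac (-1 : ℝ)

/-- The uniform measure on `{-1, 1}ⁿ`. -/
noncomputable def bernoulliCube (n : ℕ) : Measure (Fin n → ℝ) :=
  Measure.pi fun _ => bernoulliPM

/-- The sign function, with value `1` at `0`. -/
noncomputable def psign (r : ℝ) : ℝ := if 0 ≤ r then 1 else -1

/-- The average sensitivity `as(f) = ∑ᵢ Pr_A(f(A) ≠ f(A⁽ⁱ⁾))`. -/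
noncomputable def avgSensitivity (n : ℕ) (f : (Fin n → ℝ) → ℝ) : ℝ :=
  ∑ i : Fin n,
    ((bernoulliCube n) {a | f a ≠ f (Function.update a i (-(a i)))}).toReal

/-- The Gaussian average sensitivity `gas(f) = ∑ᵢ Pr(f(X) ≠ f(X⁽ⁱ⁾))`. -/
noncomputable def gaussAvgSensitivity (n : ℕ) (f : (Fin n → ℝ) → ℝ) : ℝ :=
  ∑ i : Fin n,
    (((stdGaussian n).prod (gaussianReal 0 1))
      {xy | f xy.1 ≠ f (Function.update xy.1 i xy.2)}).toReal

instance : IsProbabilityMeasure bernoulliPM := ⟨by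
  simp [bernoulliPM, ENNReal.inv_two_add_inv_two]⟩

instance (n : ℕ) : IsProbabilityMeasure (bernoulliCube n) := by
  unfold bernoulliCube; infer_instance

instance (n : ℕ) : IsProbabilityMeasure (stdGaussian n) := by
  unfold _root_.stdGaussian; infer_instance

/-- The interpolation point: coordinate `j` is `(u j).1` if `a j = 1`, `(u j).2` if `a j = -1`. -/
noncomputable def zpt {n : ℕ} (a : Fin n → ℝ) (u : Fin n → ℝ × ℝ) : Fin n → ℝ :=
  fun j => ((u j).1 + (u j).2) / 2 + ((u j).1 - (u j).2) / 2 * a j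

/-- The pair measure. -/
noncomputable def pairM (n : ℕ) : Measure (Fin n → ℝ × ℝ) :=
  Measure.pi fun _ => (gaussianReal 0 1).prod (gaussianReal 0 1)

instance (n : ℕ) : IsProbabilityMeasure (pairM n) := by
  unfold pairM; infer_instance

/-- The restricted polynomial. -/
noncomputable def qpoly {n : ℕ} (p : MvPolynomial (Fin n) ℝ) (u : Fin n → ℝ × ℝ) :
    MvPolynomial (Fin n) ℝ :=
  MvPolynomial.bind₁ (fun j => MvPolynomial.C (((u j).1 + (u j).2) / 2) +
    MvPolynomial.C (((u j).1 - (u j).2) / 2) * MvPolynomial.X j) p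

lemma eval_qpoly {n : ℕ} (p : MvPolynomial (Fin n) ℝ) (u : Fin n → ℝ × ℝ) (a : Fin n → ℝ) :
    MvPolynomial.eval a (qpoly p u) = MvPolynomial.eval (zpt a u) p := by
  unfold qpoly
  rw [← MvPolynomial.eval₂_id, ← MvPolynomial.eval₂_id, MvPolynomial.eval₂_id,
    ← MvPolynomial.coe_eval₂Hom, MvPolynomial.eval, MvPolynomial.eval₂Hom_bind₁]
  simp [zpt, MvPolynomial.eval₂_id]
  rfl

lemma totalDegree_qpoly {n : ℕ} (p : MvPolynomial (Fin n) ℝ) (u : Fin n → ℝ × ℝ) :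
    (qpoly p u).totalDegree ≤ p.totalDegree := by
  unfold qpoly
  rw [MvPolynomial.bind₁, MvPolynomial.aeval_def, MvPolynomial.eval₂_eq]
  refine MvPolynomial.totalDegree_finsetSum_le fun m hm => ?_
  refine (MvPolynomial.totalDegree_mul _ _).trans ?_
  rw [MvPolynomial.algebraMap_eq, MvPolynomial.totalDegree_C, zero_add]
  refine (MvPolynomial.totalDegree_finset_prod _ _).trans ?_
  refine le_trans (Finset.sum_le_sum (g := fun j => m j) fun j _ => ?_)
    (MvPolynomial.le_totalDegree hm)
  refine (MvPolynomial.totalDegree_pow _ _).trans ?_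
  refine (Nat.mul_le_mul_left _ (?_ : _ ≤ 1)).trans (mul_one _).le
  refine (MvPolynomial.totalDegree_add _ _).trans (max_le (by simp) ?_)
  refine (MvPolynomial.totalDegree_mul _ _).trans (by simp)

lemma ae_bernoulli (n : ℕ) : ∀ᵐ a ∂(bernoulliCube n), ∀ j, a j = 1 ∨ a j = -1 := by
  rw [ae_all_iff]
  intro j
  have h : ∀ᵐ r ∂bernoulliPM, r = 1 ∨ r = -1 := by
    have hm : MeasurableSet {r : ℝ | ¬ (r = 1 ∨ r = -1)} :=
      (((measurableSet_singleton (1:ℝ)).union (measurableSet_singleton (-1:ℝ)))).compl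
    rw [ae_iff, bernoulliPM]
    simp [hm]
  exact (Measure.tendsto_eval_ae_ae (μ := fun _ : Fin n => bernoulliPM) (i := j)).eventually h

lemma mp_flip {n : ℕ} (a : Fin n → ℝ) (ha : ∀ j, a j = 1 ∨ a j = -1) :
    MeasurePreserving (fun u : Fin n → ℝ × ℝ => fun j => (zpt a u j, zpt (fun k => -a k) u j))
      (pairM n) (pairM n) := by
  have := measurePreserving_pi (fun _ : Fin n => (gaussianReal 0 1).prod (gaussianReal 0 1))
    (fun _ : Fin n => (gaussianReal 0 1).prod (gaussianReal 0 1))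
    (f := fun j (v : ℝ × ℝ) => ((v.1 + v.2) / 2 + (v.1 - v.2) / 2 * a j,
      (v.1 + v.2) / 2 + (v.1 - v.2) / 2 * (-a j))) (fun j => by
        rcases ha j with h | h
        · convert MeasurePreserving.id _ using 1
          funext v
          ext <;> simp [h] <;> ring
        · convert Measure.measurePreserving_swap (μ := gaussianReal 0 1) (ν := gaussianReal 0 1) using 1
          funext v
          ext <;> simp [h] <;> ring)
  exact this

lemma mp_proj {n : ℕ} (i : Fin n) :
    MeasurePreserving (fun u : Fin n → ℝ × ℝ => ((fun j => (u j).1), (u i).2))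
      (pairM n) ((stdGaussian n).prod (gaussianReal 0 1)) := by
  have h1 := measurePreserving_arrowProdEquivProdArrow ℝ ℝ (Fin n)
    (fun _ => gaussianReal 0 1) (fun _ => gaussianReal 0 1)
  have h2 := measurePreserving_eval (fun _ : Fin n => gaussianReal 0 1) i
  have h3 := (MeasurePreserving.id (stdGaussian n)).prod h2
  exact h3.comp h1

lemma measurable_psign : Measurable psign := by
  unfold psign
  exact Measurable.ite measurableSet_Ici measurable_const measurable_const

lemma measurable_F {n : ℕ} (p : MvPolynomial (Fin n) ℝ) :
    Measurable (fun x => psign (MvPolynomial.eval x p)) :=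
  measurable_psign.comp (MvPolynomial.continuous_eval p).measurable

lemma measurable_upd {n : ℕ} (i : Fin n) :
    Measurable (fun a : Fin n → ℝ => Function.update a i (-(a i))) := by
  refine measurable_pi_lambda _ fun j => ?_
  simp only [Function.update_apply]
  split_ifs <;> fun_prop

lemma zpt_upd {n : ℕ} (a : Fin n → ℝ) (u : Fin n → ℝ × ℝ) (i : Fin n) :
    zpt (Function.update a i (-(a i))) u =
      Function.update (zpt a u) i (zpt (fun k => -a k) u i) := by
  funext j
  by_cases h : j = i
  · subst h; simp [zpt]
  · simp [zpt, h]

lemma measurable_zpt {n : ℕ} :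
    Measurable (fun w : (Fin n → ℝ) × (Fin n → ℝ × ℝ) => zpt w.1 w.2) := by
  refine measurable_pi_lambda _ fun j => ?_
  unfold zpt
  fun_prop

lemma key {n : ℕ} (F : (Fin n → ℝ) → ℝ) (hF : Measurable F) (i : Fin n) :
    ((stdGaussian n).prod (gaussianReal 0 1))
      {xy | F xy.1 ≠ F (Function.update xy.1 i xy.2)} =
    ∫⁻ u, (bernoulliCube n) {a | F (zpt a u) ≠ F (zpt (Function.update a i (-(a i))) u)}
      ∂(pairM n) := by
  have hS : MeasurableSet {w : (Fin n → ℝ) × (Fin n → ℝ × ℝ) |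
      F (zpt w.1 w.2) ≠ F (zpt (Function.update w.1 i (-(w.1 i))) w.2)} := by
    refine (measurableSet_eq_fun (hF.comp measurable_zpt) (hF.comp ?_)).compl
    exact measurable_zpt.comp (((measurable_upd i).comp measurable_fst).prodMk measurable_snd)
  have hT : MeasurableSet {xy : (Fin n → ℝ) × ℝ |
      F xy.1 ≠ F (Function.update xy.1 i xy.2)} := by
    refine (measurableSet_eq_fun (hF.comp measurable_fst) (hF.comp ?_)).compl
    refine measurable_pi_lambda _ fun j => ?_
    simp only [Function.update_apply]
    split_ifs <;> fun_prop
  have e1 := Measure.prod_apply (μ := bernoulliCube n) (ν := pairM n) hS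
  have e2 := Measure.prod_apply_symm (μ := bernoulliCube n) (ν := pairM n) hS
  refine Eq.trans ?_ (e1.symm.trans e2)
  symm
  rw [lintegral_congr_ae (g := fun _ => ((stdGaussian n).prod (gaussianReal 0 1))
      {xy | F xy.1 ≠ F (Function.update xy.1 i xy.2)})]
  · simp
  filter_upwards [ae_bernoulli n] with a ha
  have hm := (mp_proj i).comp (mp_flip a ha)
  rw [← hm.measure_preimage hT.nullMeasurableSet]
  congr 1
  ext u
  simp only [Set.mem_preimage, Set.mem_setOf_eq, Function.comp, zpt_upd]

/-- The largest Gaussian average sensitivity of a degree-`d` PTF in `n` variables is at most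
the largest average sensitivity of a degree-`d` PTF in `n` variables: if `as(g) ≤ s` for every
degree-`d` polynomial threshold function `g` in `n` variables, then `gas(f) ≤ s` for every
degree-`d` polynomial threshold function `f` in `n` variables. -/
theorem gas_le_max_as (n d : ℕ) (p : MvPolynomial (Fin n) ℝ) (hp : p.totalDegree ≤ d)
    (s : ℝ)
    (hs : ∀ q : MvPolynomial (Fin n) ℝ, q.totalDegree ≤ d →
      avgSensitivity n (fun x => psign (MvPolynomial.eval x q)) ≤ s) :
    gaussAvgSensitivity n (fun x => psign (MvPolynomial.eval x p)) ≤ s := by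
  have hs0 : 0 ≤ s := le_trans (Finset.sum_nonneg fun _ _ => ENNReal.toReal_nonneg) (hs p hp)
  set F : (Fin n → ℝ) → ℝ := fun x => psign (MvPolynomial.eval x p) with hFdef
  have hF : Measurable F := measurable_F p
  unfold gaussAvgSensitivity
  rw [← ENNReal.toReal_sum (fun _ _ => measure_ne_top _ _)]
  refine ENNReal.toReal_le_of_le_ofReal hs0 ?_
  simp only [key F hF]
  refine le_trans (le_of_eq (lintegral_finset_sum' _ fun i _ => ?_).symm) ?_
  · have hS : MeasurableSet {w : (Fin n → ℝ) × (Fin n → ℝ × ℝ) |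
        F (zpt w.1 w.2) ≠ F (zpt (Function.update w.1 i (-(w.1 i))) w.2)} := by
      refine (measurableSet_eq_fun (hF.comp measurable_zpt) (hF.comp ?_)).compl
      exact measurable_zpt.comp (((measurable_upd i).comp measurable_fst).prodMk measurable_snd)
    exact (measurable_measure_prodMk_right hS).aemeasurable
  calc _ ≤ ∫⁻ _, ENNReal.ofReal s ∂(pairM n) := by
        refine lintegral_mono fun u => ?_
        have h := hs (qpoly p u) ((totalDegree_qpoly p u).trans hp)
        unfold avgSensitivity at h
        rw [← ENNReal.toReal_sum (fun _ _ => measure_ne_top _ _)] at h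
        simp only [eval_qpoly] at h
        exact (ENNReal.le_ofReal_iff_toReal_le
          (ENNReal.sum_ne_top.2 fun _ _ => measure_ne_top _ _) hs0).2 h
    _ = ENNReal.ofReal s := by simp
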